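/- Let α be a type and let A, B be lists over α, both of length 2. Let n ≥ 2 and let i be an integer with 1 ≤ i ≤ 2^{n−1}. Set k' = 6·2^{n−2} + i − 1 and k'' = 6·2^{n−2} − i + 1. Then |S_{A,B}(k'+1)| = 2·d(k'+1) + 2·d(k''), i.e., |S(k'+1)|/2 − d(k'+1) = d(k''), where d is Stern's diatomic sequence. -/

import Mathlib

/-- Stern's diatomic sequence. -/
def stern : ℕ → ℕ
  | 0 => 0
  | 1 => 1
  | n + 2 =>
    if (n + 2) % 2 = 0 then stern ((n + 2) / 2)
    else stern ((n + 2) / 2) + stern ((n + 2) / 2 + 1)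
decreasing_by all_goals omega

/-- OEIS A003602: a(1)=1, a(2n)=a(n), a(2n+1)=n+1. (a(0)=0 as junk value.) -/
def aseq : ℕ → ℕ
  | 0 => 0
  | 1 => 1
  | n + 2 =>
    if (n + 2) % 2 = 0 then aseq ((n + 2) / 2)
    else (n + 2) / 2 + 1
decreasing_by all_goals omega

-- the modified sequence `a*`: zero at powers of two.
open Classical in
noncomputable def aStar (j : ℕ) : ℕ :=
  if ∃ k, j = 2 ^ k then 0 else aseq j

theorem aseq_le (n : ℕ) : aseq n ≤ n := by
  induction n using Nat.strong_induction_on with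
  | _ n ih =>
    match n with
    | 0 => simp [aseq]
    | 1 => simp [aseq]
    | m + 2 =>
      rw [aseq]
      split
      · exact le_trans (ih ((m + 2) / 2) (by omega)) (by omega)
      · omega

theorem aStar_le (j : ℕ) : aStar j ≤ j := by
  unfold aStar
  split
  · omega
  · exact aseq_le j

/-- The Markov-type sequence `S_{A,B}(n)`. -/
noncomputable def mseq {α : Type*} (A B : List α) : ℕ → List α
  | 0 => A
  | 1 => B
  | 2 => A ++ B
  | n + 3 =>
    if (n + 3) % 2 = 0 then
      mseq A B ((n + 3) / 2) ++ mseq A B (aseq ((n + 3) / 2))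
    else
      mseq A B (aStar ((n + 4) / 2 - 1)) ++ mseq A B ((n + 4) / 2)
decreasing_by
  all_goals first
    | omega
    | exact lt_of_le_of_lt (aseq_le _) (by omega)
    | exact lt_of_le_of_lt (aStar_le _) (by omega)

/-!
When `|A| = |B| = c`, one has `|S(m + 1)| = c (d(m + 1) + d(m))`, and `d(m)` is then reflected by
the palindrome symmetry of `d` on the dyadic block `[2^(k+1), 2^(k+2)]`, whose centre is `3 * 2^k`.
The length formula follows by strong induction: `2 a(n) - 1` is the odd part of `n`, hence
`d(n) = d(2 a(n) - 1) = d(a(n) - 1) + d(a(n))`, so the induction hypothesis reads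
`|S(a(n))| = c d(n)`, and the recursion for `S` becomes the one for `d`. Replacing `a` by `a*` only
exchanges `S(1) = B` for `S(0) = A`, which have the same length.
-/

theorem stern_two_mul (n : ℕ) : stern (2 * n) = stern n := by
  rcases n with _ | n
  · rfl
  · rw [show 2 * (n + 1) = 2 * n + 2 by ring, stern, if_pos (by omega)]
    congr 1
    omega

theorem stern_two_mul_add_one (n : ℕ) : stern (2 * n + 1) = stern n + stern (n + 1) := by
  rcases n with _ | n
  · simp [stern]
  · rw [show 2 * (n + 1) + 1 = 2 * n + 1 + 2 by ring, stern, if_neg (by omega)]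
    congr 2 <;> omega

theorem stern_three_mul_two_pow_add (k t : ℕ) (ht : t ≤ 2 ^ k) :
    stern (3 * 2 ^ k + t) = stern (3 * 2 ^ k - t) := by
  induction k generalizing t with
  | zero =>
    rw [pow_zero] at ht ⊢
    interval_cases t <;> simp [stern]
  | succ k ih =>
    rw [pow_succ] at ht ⊢
    rcases Nat.even_or_odd' t with ⟨u, rfl | rfl⟩
    · calc stern (3 * (2 ^ k * 2) + 2 * u)
          = stern (2 * (3 * 2 ^ k + u)) := by ring_nf
        _ = stern (2 * (3 * 2 ^ k - u)) := by
          rw [stern_two_mul, stern_two_mul, ih u (by omega)]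
        _ = stern (3 * (2 ^ k * 2) - 2 * u) := by congr 1; omega
    · calc stern (3 * (2 ^ k * 2) + (2 * u + 1))
          = stern (2 * (3 * 2 ^ k + u) + 1) := by ring_nf
        _ = stern (3 * 2 ^ k + u) + stern (3 * 2 ^ k + (u + 1)) := stern_two_mul_add_one _
        _ = stern (3 * 2 ^ k - (u + 1)) + stern (3 * 2 ^ k - (u + 1) + 1) := by
          rw [ih u (by omega), ih (u + 1) (by omega), add_comm,
            show 3 * 2 ^ k - (u + 1) + 1 = 3 * 2 ^ k - u by omega]
        _ = stern (2 * (3 * 2 ^ k - (u + 1)) + 1) := (stern_two_mul_add_one _).symm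
        _ = stern (3 * (2 ^ k * 2) - (2 * u + 1)) := by congr 1; omega

theorem aseq_two_mul (n : ℕ) : aseq (2 * n) = aseq n := by
  rcases n with _ | n
  · rfl
  · rw [show 2 * (n + 1) = 2 * n + 2 by ring, aseq, if_pos (by omega)]
    congr 1
    omega

theorem aseq_two_mul_add_one (n : ℕ) : aseq (2 * n + 1) = n + 1 := by
  rcases n with _ | n
  · simp [aseq]
  · rw [show 2 * (n + 1) + 1 = 2 * n + 1 + 2 by ring, aseq, if_neg (by omega)]
    omega

theorem aseq_two_pow (k : ℕ) : aseq (2 ^ k) = 1 := by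
  induction k with
  | zero => simp [aseq]
  | succ k ih => rw [pow_succ', aseq_two_mul, ih]

theorem exists_aseq_eq_succ_and_stern_eq (n : ℕ) (hn : 0 < n) :
    ∃ m, aseq n = m + 1 ∧ stern n = stern m + stern (m + 1) := by
  induction n using Nat.strong_induction_on with
  | _ n ih =>
    rcases Nat.even_or_odd' n with ⟨j, rfl | rfl⟩
    · rw [aseq_two_mul, stern_two_mul]
      exact ih j (by omega) (by omega)
    · exact ⟨j, aseq_two_mul_add_one j, stern_two_mul_add_one j⟩

section Length

variable {α : Type*} (A B : List α)

theorem mseq_two_mul (j : ℕ) (hj : 2 ≤ j) :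
    mseq A B (2 * j) = mseq A B j ++ mseq A B (aseq j) := by
  obtain ⟨p, rfl⟩ := Nat.exists_eq_add_of_le' hj
  rw [show 2 * (p + 2) = 2 * p + 1 + 3 by ring, mseq, if_pos (by omega),
    show (2 * p + 1 + 3) / 2 = p + 2 by omega]

theorem mseq_two_mul_add_one (j : ℕ) (hj : 1 ≤ j) :
    mseq A B (2 * j + 1) = mseq A B (aStar j) ++ mseq A B (j + 1) := by
  obtain ⟨p, rfl⟩ := Nat.exists_eq_add_of_le' hj
  rw [show 2 * (p + 1) + 1 = 2 * p + 3 by ring, mseq, if_neg (by omega),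
    show (2 * p + 4) / 2 - 1 = p + 1 by omega, show (2 * p + 4) / 2 = p + 1 + 1 by omega]

variable {A B}

theorem length_mseq_aStar (hAB : A.length = B.length) (j : ℕ) :
    (mseq A B (aStar j)).length = (mseq A B (aseq j)).length := by
  unfold aStar
  split_ifs with hj
  · obtain ⟨k, rfl⟩ := hj
    simpa [aseq_two_pow, mseq] using hAB
  · rfl

theorem length_mseq_succ (hAB : A.length = B.length) (m : ℕ) :
    (mseq A B (m + 1)).length = A.length * (stern (m + 1) + stern m) := by
  induction m using Nat.strong_induction_on with
  | _ m ih =>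
    have length_mseq_aseq (n : ℕ) (hn : 0 < n) (hnm : n ≤ m) :
        (mseq A B (aseq n)).length = A.length * stern n := by
      obtain ⟨l, haseq, hstern⟩ := exists_aseq_eq_succ_and_stern_eq n hn
      have hl : l < m := by have := aseq_le n; omega
      rw [haseq, ih l hl, hstern, add_comm]
    rcases Nat.even_or_odd' m with ⟨j, rfl | rfl⟩
    · rcases Nat.eq_zero_or_pos j with rfl | hj
      · simp [mseq, stern, hAB]
      · rw [mseq_two_mul_add_one A B j hj, List.length_append, length_mseq_aStar hAB,
          length_mseq_aseq j hj (by omega), ih j (by omega), stern_two_mul_add_one, stern_two_mul]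
        ring
    · rcases Nat.eq_zero_or_pos j with rfl | hj
      · simp [mseq, stern, hAB, mul_two]
      · rw [show 2 * j + 1 + 1 = 2 * (j + 1) by ring, mseq_two_mul A B (j + 1) (by omega),
          List.length_append, ih j (by omega), length_mseq_aseq (j + 1) (by omega) (by omega),
          stern_two_mul, stern_two_mul_add_one]
        ring

end Length

theorem stmt10_general {α : Type*} (A B : List α) (hAB : A.length = B.length)
    (n i : ℕ) (hn : 2 ≤ n) (hi1 : 1 ≤ i) (hi2 : i ≤ 2 ^ (n - 1)) :
    (mseq A B ((6 * 2 ^ (n - 2) + i - 1) + 1)).length =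
      A.length * stern ((6 * 2 ^ (n - 2) + i - 1) + 1) +
        A.length * stern (6 * 2 ^ (n - 2) - i + 1) := by
  have two_pow_pred : 2 ^ (n - 1) = 2 * 2 ^ (n - 2) := by
    rw [← pow_succ', show n - 2 + 1 = n - 1 by omega]
  have stern_reflect : stern (6 * 2 ^ (n - 2) + i - 1) = stern (6 * 2 ^ (n - 2) - i + 1) := by
    convert stern_three_mul_two_pow_add (n - 1) (i - 1) (by omega) using 2 <;> omega
  rw [length_mseq_succ hAB, stern_reflect, mul_add]

/-- for `A`, `B` of length 2, `n ≥ 2`, `1 ≤ i ≤ 2^{n−1}`,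
`k' = 6·2^{n−2} + i − 1` and `k'' = 6·2^{n−2} − i + 1`, one has
`|S_{A,B}(k'+1)| = 2·d(k'+1) + 2·d(k'')`. -/
theorem stmt10 {α : Type*} (A B : List α) (hA : A.length = 2) (hB : B.length = 2)
    (n i : ℕ) (hn : 2 ≤ n) (hi1 : 1 ≤ i) (hi2 : i ≤ 2 ^ (n - 1)) :
    (mseq A B ((6 * 2 ^ (n - 2) + i - 1) + 1)).length =
      2 * stern ((6 * 2 ^ (n - 2) + i - 1) + 1) + 2 * stern (6 * 2 ^ (n - 2) - i + 1) := by
  simpa only [hA] using stmt10_general A B (hA.trans hB.symm) n i hn hi1 hi2
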